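/- Let F be a field with 121 elements and let φ be the image of 3 under the canonical map ℤ → F (so φ² + φ = 1 in F). Define f_Y(x,y,z,v) = x·y·z·v·(x+y+z)·(φy−z+v)·(x+y+φv)·((1−φ)x+y−φz+φv). Then the number of tuples (x,y,z,v,u) ∈ F⁵ with (x,y,z,v) ≠ (0,0,0,0) and u² = f_Y(x,y,z,v) equals 214115640 = 1784297·120. -/

import Mathlib

/-- The octic defining the singular double cover `Y′ : u² = f_Y(x,y,z,v)`
whose crepant resolution is the rigid Calabi–Yau threefold `Y` over `ℚ(√5)`. -/
def fY {F : Type} [CommRing F] (φ x y z v : F) : F :=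
  x * y * z * v * (x + y + z) * (φ*y - z + v) * (x + y + φ*v)
    * ((1 - φ)*x + y - φ*z + φ*v)

namespace PC

/-- norm form of `a + b i`. -/
def nm (a b : ℕ) : ℕ := a * a + b * b

/-- Structural sum over `range n`. -/
def sm (f : ℕ → ℕ) (n : ℕ) : ℕ := Nat.rec 0 (fun k r => r + f k) n

/-- Structural sum of integers over `range n`. -/
def smZ (f : ℕ → ℤ) (n : ℕ) : ℤ := Nat.rec 0 (fun k r => r + f k) n

lemma sm_eq (f : ℕ → ℕ) (n : ℕ) : sm f n = ∑ i ∈ Finset.range n, f i := by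
  induction n with
  | zero => rfl
  | succ n ih => rw [Finset.sum_range_succ, ← ih]; rfl

lemma smZ_eq (f : ℕ → ℤ) (n : ℕ) : smZ f n = ∑ i ∈ Finset.range n, f i := by
  induction n with
  | zero => rfl
  | succ n ih => rw [Finset.sum_range_succ, ← ih]; rfl

/-- one plus the quadratic character of a number with norm `n`. -/
def ch (n : ℕ) : ℕ := ((n % 11) ^ 5 + 1) % 11

/-- First fibre sum, shifted by 121. -/
def cA (s c d : ℕ) : ℕ := sm (fun a => sm (fun b =>
  ch (nm a b * nm (s + 10 * a) (10 * b) * nm (3 * s + 8 * a + 10 * c) (8 * b + 10 * d)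
    * nm (s + 8 * a + 8 * c) (8 * b + 8 * d))) 11) 11

/-- Second fibre sum, shifted by 121. -/
def cB (s c d : ℕ) : ℕ := sm (fun a => sm (fun b =>
  ch (nm a b * nm (a + 10 * c) (b + 10 * d) * nm (s + a) b
    * nm (s + 3 * a + 8 * c) (3 * b + 8 * d))) 11) 11

/-- product of the two fibre sums -/
def cH (s c d : ℕ) : ℤ := ((cA s c d : ℤ) - 121) * ((cB s c d : ℤ) - 121)

lemma compute0 : cH 0 0 0 = 14400 := by decide +kernel

lemma compute1 : cH 0 1 0 + smZ (fun c => smZ (fun d => cH 1 c d) 11) 11 = -2147 := by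
  decide +kernel

section field
variable {F : Type} [Field F] [Fintype F]

lemma charP11 (hF : Fintype.card F = 121) : CharP F 11 := by
  obtain ⟨p, hp⟩ := CharP.exists F
  obtain ⟨n, hpr, hn⟩ := FiniteField.card F p
  rw [hF] at hn
  have h1 : p ∣ 11 ^ 2 := by
    have : p ∣ p ^ (n : ℕ) := dvd_pow_self p n.ne_zero
    rw [← hn] at this
    simpa using this
  have h2 : p = 11 := (Nat.prime_dvd_prime_iff_eq hpr (by norm_num)).1 (hpr.dvd_of_dvd_pow h1)
  exact h2 ▸ hp

/-- `a + b i` -/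
def e (i : F) (a b : ℕ) : F := (a : F) + (b : F) * i

lemma zmod_aniso : ∀ u v : ZMod 11, u * u + v * v = 0 → u = 0 ∧ v = 0 := by decide

lemma e_bij (hF : Fintype.card F = 121) [CharP F 11] (i : F) (hi : i * i = -1) :
    Function.Bijective (fun p : Fin 11 × Fin 11 => e i p.1 p.2) := by
  rw [Fintype.bijective_iff_injective_and_card]
  refine ⟨?_, by simp [hF]⟩
  rintro ⟨a, b⟩ ⟨a', b'⟩ h
  simp only [e] at h
  haveI : Fact (Nat.Prime 11) := ⟨by norm_num⟩
  let g := ZMod.castHom (dvd_refl 11) F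
  have hg : Function.Injective g := g.injective
  have key : ((a : ℕ) - (a' : ℕ) : ZMod 11) * ((a : ℕ) - (a' : ℕ) : ZMod 11)
      + ((b : ℕ) - (b' : ℕ) : ZMod 11) * ((b : ℕ) - (b' : ℕ) : ZMod 11) = 0 := by
    apply hg
    simp only [map_add, map_mul, map_sub, map_natCast, map_zero]
    have h2 : ((a : ℕ) : F) - (a' : ℕ) = - (((b : ℕ) : F) - (b' : ℕ)) * i := by
      linear_combination h
    rw [h2]
    linear_combination (((b : ℕ) : F) - (b' : ℕ)) ^ 2 * hi
  obtain ⟨h1, h2⟩ := zmod_aniso _ _ key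
  rw [sub_eq_zero, ZMod.natCast_eq_natCast_iff] at h1 h2
  have := Nat.ModEq.eq_of_lt_of_lt h1 a.2 a'.2
  have := Nat.ModEq.eq_of_lt_of_lt h2 b.2 b'.2
  ext <;> simpa

lemma sum_F (hF : Fintype.card F = 121) [CharP F 11] (i : F) (hi : i * i = -1) (f : F → ℤ) :
    ∑ x, f x = ∑ a ∈ Finset.range 11, ∑ b ∈ Finset.range 11, f (e i a b) := by
  rw [← (e_bij hF i hi).sum_comp, Fintype.sum_prod_type]
  rw [← Fin.sum_univ_eq_sum_range (fun a => ∑ b ∈ Finset.range 11, f (e i a b)) 11]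
  refine Finset.sum_congr rfl fun a _ => ?_
  rw [← Fin.sum_univ_eq_sum_range (fun b => f (e i a b)) 11]

lemma nat_pow11 [CharP F 11] (a : ℕ) : (a : F) ^ 11 = a := by
  haveI : Fact (Nat.Prime 11) := ⟨by norm_num⟩
  have h := ZMod.pow_card (p := 11) (a : ZMod 11)
  have := congrArg (ZMod.castHom (dvd_refl 11) F) h
  simpa only [map_pow, map_natCast] using this

lemma e_pow [CharP F 11] (i : F) (hi : i * i = -1) (a b : ℕ) :
    (e i a b) ^ 60 = ((nm a b : ℕ) : F) ^ 5 := by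
  haveI : Fact (Nat.Prime 11) := ⟨by norm_num⟩
  have h11 : (e i a b) ^ 11 = a - b * i := by
    have h3 : i ^ 11 = -i := by
      calc i ^ 11 = (i * i) ^ 5 * i := by ring
        _ = -i := by rw [hi]; ring
    rw [e, add_pow_char, mul_pow, nat_pow11, nat_pow11, h3]; ring
  have h12 : (e i a b) ^ 12 = ((nm a b : ℕ) : F) := by
    rw [pow_succ, h11, e, nm]
    push_cast
    linear_combination (-(b : F) ^ 2) * hi
  rw [← h12]; ring

open Classical in
lemma char_e (hF : Fintype.card F = 121) [CharP F 11] (i : F) (hi : i * i = -1)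
    {n : ℕ} (x : F) (hx : x ^ 60 = (n : F) ^ 5) :
    quadraticChar F x = (ch n : ℤ) - 1 := by
  have hch : ringChar F ≠ 2 := by rw [ringChar.eq F 11]; norm_num
  have h1 := quadraticChar_eq_pow_of_char_ne_two' hch x
  rw [hF, show 121 / 2 = 60 from rfl, hx] at h1
  have h2 : ((quadraticChar F x : ℤ) : F) = (((n : ℤ) ^ 5 : ℤ) : F) := by
    rw [h1]; push_cast; rfl
  rw [CharP.intCast_eq_intCast F 11] at h2
  have h3 : (ch n : ℤ) ≡ (n : ℤ) ^ 5 + 1 [ZMOD 11] := by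
    rw [ch]; push_cast
    refine (Int.mod_modEq _ _).trans (Int.ModEq.add_right _ ?_)
    exact (Int.mod_modEq _ _).pow 5
  have h4 : (ch n : ℤ) ≡ quadraticChar F x + 1 [ZMOD 11] := h3.trans (h2.symm.add_right 1)
  have h5 : ch n < 11 := Nat.mod_lt _ (by norm_num)
  have h6 : quadraticChar F x = 0 ∨ quadraticChar F x = 1 ∨ quadraticChar F x = -1 := by
    by_cases h : x = 0
    · left; simp [h]
    · right; exact quadraticChar_dichotomy h
  unfold Int.ModEq at h4
  omega

variable [DecidableEq F]

/-- First fibre sum. -/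
def A (s w : F) : ℤ := ∑ x, quadraticChar F (x * (s - x) * (3 * (s - x) - w) * (s - 3 * x - 3 * w))

/-- Second fibre sum. -/
def B (s w : F) : ℤ := ∑ z, quadraticChar F (z * (z - w) * (s + z) * (s + 3 * (z - w)))

lemma sum_shift (s : F) (f : F → ℤ) : ∑ y, f y = ∑ y, f (y - s) :=
  ((Equiv.subRight s).sum_comp f).symm

lemma S_eq [CharP F 11] : ∑ x : F, ∑ y : F, ∑ z : F, ∑ v : F, quadraticChar F (fY 3 x y z v)
    = ∑ s : F, ∑ w : F, A s w * B s w := by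
  have h1 : ∀ x : F, ∑ y : F, ∑ z : F, ∑ v : F, quadraticChar F (fY 3 x y z v)
      = ∑ s : F, ∑ z : F, ∑ w : F, quadraticChar F (fY 3 x (s - x) z (z - w)) := by
    intro x
    rw [sum_shift x]
    refine Finset.sum_congr rfl fun s _ => Finset.sum_congr rfl fun z _ => ?_
    exact ((Equiv.subLeft z).sum_comp (fun v => quadraticChar F (fY 3 x (s - x) z v))).symm
  simp_rw [h1]
  rw [Finset.sum_comm]
  refine Finset.sum_congr rfl fun s _ => ?_
  simp_rw [A, B, Finset.sum_mul_sum]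
  rw [Finset.sum_comm' (t' := Finset.univ) (s' := fun _ => Finset.univ) (by simp)]
  rw [Finset.sum_comm]
  rw [Finset.sum_comm]
  simp_rw [← map_mul]
  have h2 : ∀ z : F, ∑ x : F, ∑ w : F, quadraticChar F (fY 3 x (s - x) z (z - w))
    = ∑ w : F, ∑ x : F, quadraticChar F (fY 3 x (s - x) z (z - w)) := fun z => Finset.sum_comm
  simp_rw [h2]
  rw [Finset.sum_comm]
  refine Finset.sum_congr rfl fun w _ => ?_
  rw [Finset.sum_comm]
  refine Finset.sum_congr rfl fun x _ => Finset.sum_congr rfl fun z _ => ?_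
  congr 1
  unfold fY
  ring

lemma char4 {l : F} (hl : l ≠ 0) (t : F) : quadraticChar F (l ^ 4 * t) = quadraticChar F t := by
  rw [map_mul, show l ^ 4 = (l ^ 2) ^ 2 by ring, quadraticChar_sq_one' (pow_ne_zero 2 hl), one_mul]

lemma A_hom {l : F} (hl : l ≠ 0) (s w : F) : A (l * s) (l * w) = A s w := by
  unfold A
  rw [← Equiv.sum_comp (Equiv.mulLeft₀ l hl)]
  refine Finset.sum_congr rfl fun x _ => ?_
  rw [← char4 hl (x * _ * _ * _)]
  congr 1
  simp only [Equiv.mulLeft₀_apply]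
  ring

lemma B_hom {l : F} (hl : l ≠ 0) (s w : F) : B (l * s) (l * w) = B s w := by
  unfold B
  rw [← Equiv.sum_comp (Equiv.mulLeft₀ l hl)]
  refine Finset.sum_congr rfl fun x _ => ?_
  rw [← char4 hl (x * _ * _ * _)]
  congr 1
  simp only [Equiv.mulLeft₀_apply]
  ring

lemma sum_const_ne (hF : Fintype.card F = 121) (f : F → ℤ) (c : ℤ) (h : ∀ x, x ≠ 0 → f x = c) :
    ∑ x, f x = f 0 + 120 * c := by
  rw [← Finset.add_sum_erase _ _ (Finset.mem_univ (0 : F))]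
  rw [Finset.sum_congr rfl (fun x hx => h x (Finset.ne_of_mem_erase hx))]
  rw [Finset.sum_const, Finset.card_erase_of_mem (Finset.mem_univ _), Finset.card_univ, hF]
  simp

lemma S_hom (hF : Fintype.card F = 121) : ∑ s : F, ∑ w : F, A s w * B s w
    = A (0 : F) 0 * B (0 : F) 0 + 120 * (A (0 : F) 1 * B (0 : F) 1
      + ∑ w : F, A 1 w * B 1 w) := by
  rw [sum_const_ne hF (fun s : F => ∑ w : F, A s w * B s w) (∑ w : F, A 1 w * B 1 w)]
  · rw [sum_const_ne hF (fun w : F => A 0 w * B 0 w) (A (0 : F) 1 * B (0 : F) 1)]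
    · ring
    · intro w hw
      have h1 := A_hom hw 0 1
      have h2 := B_hom hw 0 1
      rw [mul_zero, mul_one] at h1 h2
      simp only [h1, h2]
  · intro s hs
    rw [← Equiv.sum_comp (Equiv.mulLeft₀ s hs)]
    refine Finset.sum_congr rfl fun w _ => ?_
    have h1 := A_hom hs 1 w
    have h2 := B_hom hs 1 w
    rw [mul_one] at h1 h2
    simp only [Equiv.mulLeft₀_apply, h1, h2]

lemma eleven [CharP F 11] : (11 : F) = 0 := by
  have := CharP.cast_eq_zero F 11
  exact_mod_cast this

lemma A_eq (hF : Fintype.card F = 121) [CharP F 11] (i : F) (hi : i * i = -1) (s c d : ℕ) :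
    A (s : F) (e i c d) = (cA s c d : ℤ) - 121 := by
  rw [A, sum_F hF i hi, cA, sm_eq]
  simp_rw [sm_eq]
  push_cast
  rw [show (121 : ℤ) = ∑ a ∈ Finset.range 11, ∑ b ∈ Finset.range 11, 1 by simp,
    ← Finset.sum_sub_distrib]
  refine Finset.sum_congr rfl fun a _ => ?_
  rw [← Finset.sum_sub_distrib]
  refine Finset.sum_congr rfl fun b _ => ?_
  convert char_e hF i hi _ _
  have h := eleven (F := F)
  rw [show (s : F) - e i a b = e i (s + 10 * a) (10 * b) by
      simp only [e]; push_cast; linear_combination (-(a : F) - b * i) * h,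
    show 3 * e i (s + 10 * a) (10 * b) - e i c d
      = e i (3 * s + 8 * a + 10 * c) (8 * b + 10 * d) by
      simp only [e]; push_cast
      linear_combination (2 * (a : F) + 2 * b * i - c - d * i) * h,
    show (s : F) - 3 * e i a b - 3 * e i c d = e i (s + 8 * a + 8 * c) (8 * b + 8 * d) by
      simp only [e]; push_cast
      linear_combination (-(a : F) - b * i - c - d * i) * h]
  simp only [mul_pow, e_pow i hi, Nat.cast_mul]

lemma B_eq (hF : Fintype.card F = 121) [CharP F 11] (i : F) (hi : i * i = -1) (s c d : ℕ) :
    B (s : F) (e i c d) = (cB s c d : ℤ) - 121 := by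
  rw [B, sum_F hF i hi, cB, sm_eq]
  simp_rw [sm_eq]
  push_cast
  rw [show (121 : ℤ) = ∑ a ∈ Finset.range 11, ∑ b ∈ Finset.range 11, 1 by simp,
    ← Finset.sum_sub_distrib]
  refine Finset.sum_congr rfl fun a _ => ?_
  rw [← Finset.sum_sub_distrib]
  refine Finset.sum_congr rfl fun b _ => ?_
  convert char_e hF i hi _ _
  have h := eleven (F := F)
  rw [show (s : F) + 3 * (e i a b - e i c d) = e i (s + 3 * a + 8 * c) (3 * b + 8 * d) by
      simp only [e]; push_cast
      linear_combination (-(c : F) - d * i) * h,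
    show e i a b - e i c d = e i (a + 10 * c) (b + 10 * d) by
      simp only [e]; push_cast; linear_combination (-(c : F) - d * i) * h,
    show (s : F) + e i a b = e i (s + a) b by
      simp only [e]; push_cast; ring]
  simp only [mul_pow, e_pow i hi, Nat.cast_mul]

lemma S_val (hF : Fintype.card F = 121) [CharP F 11] :
    ∑ x : F, ∑ y : F, ∑ z : F, ∑ v : F, quadraticChar F (fY 3 x y z v) = -243240 := by
  obtain ⟨i, hi⟩ := FiniteField.isSquare_neg_one_iff (F := F) |>.2 (by rw [hF]; norm_num)
  have hi : i * i = -1 := hi.symm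
  have H : ∀ s c d : ℕ, A (s : F) (e i c d) * B (s : F) (e i c d) = cH s c d := by
    intro s c d
    rw [A_eq hF i hi, B_eq hF i hi, cH]
  rw [S_eq, S_hom hF, sum_F hF i hi]
  have h0 := H 0 0 0
  have h1 := H 0 1 0
  have h2 := H 1
  rw [show e i 0 0 = 0 by simp [e]] at h0
  rw [show e i 1 0 = 1 by simp [e]] at h1
  push_cast at h0 h1 h2
  simp_rw [h0, h1, h2]
  have h3 := compute1
  rw [smZ_eq] at h3
  simp_rw [smZ_eq] at h3
  rw [h3, compute0]
  norm_num

lemma count (hF : Fintype.card F = 121) [CharP F 11] :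
    (Nat.card {p : F × F × F × F × F |
      (p.1, p.2.1, p.2.2.1, p.2.2.2.1) ≠ (0, 0, 0, 0) ∧
      p.2.2.2.2 ^ 2 = fY 3 p.1 p.2.1 p.2.2.1 p.2.2.2.1} : ℤ) = 214115640 := by
  have hch : ringChar F ≠ 2 := by rw [ringChar.eq F 11]; norm_num
  have hsq : ∀ t : F, (∑ u : F, if u ^ 2 = t then (1 : ℤ) else 0) = quadraticChar F t + 1 := by
    intro t
    rw [← quadraticChar_card_sqrts hch t]
    simp
  rw [Nat.card_eq_fintype_card, Fintype.card_subtype, Finset.card_filter]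
  push_cast
  simp only [Set.mem_setOf_eq, Fintype.sum_prod_type]
  have h1 : ∀ x y z v : F, (∑ u : F, if (x, y, z, v) ≠ (0, 0, 0, 0) ∧ u ^ 2 = fY 3 x y z v
      then (1 : ℤ) else 0) = quadraticChar F (fY 3 x y z v) + 1
        - (if x = 0 then if y = 0 then if z = 0 then if v = 0 then 1 else 0 else 0 else 0 else 0)
      := by
    intro x y z v
    by_cases h : (x, y, z, v) = (0, 0, 0, 0)
    · simp only [h, ne_eq, not_true_eq_false, false_and, if_false, Finset.sum_const_zero]
      simp only [Prod.mk.injEq] at h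
      obtain ⟨rfl, rfl, rfl, rfl⟩ := h
      simp [fY]
    · simp only [ne_eq, h, not_false_eq_true, true_and, hsq]
      simp only [Prod.mk.injEq] at h
      split_ifs <;> simp_all
  simp_rw [h1, Finset.sum_sub_distrib, Finset.sum_add_distrib, S_val hF]
  simp [hF]

end field

end PC

/-- Point count over `𝔽₁₂₁` with `φ` the image of `3` under `ℤ → F` (so that
`φ² + φ = 1`): the number of tuples `(x,y,z,v,u) ∈ F⁵` with
`(x,y,z,v) ≠ (0,0,0,0)` and `u² = f_Y(x,y,z,v)` equals
`214115640 = 1784297·120`. -/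
theorem point_count_fY_121 (F : Type) [Field F] [Fintype F]
    (hF : Fintype.card F = 121) (φ : F) (hφ : φ = ((3 : ℤ) : F)) :
    φ ^ 2 + φ = 1 ∧
    Nat.card {p : F × F × F × F × F |
      (p.1, p.2.1, p.2.2.1, p.2.2.2.1) ≠ (0, 0, 0, 0) ∧
      p.2.2.2.2 ^ 2 = fY φ p.1 p.2.1 p.2.2.1 p.2.2.2.1} = 214115640 := by
  classical
  haveI := PC.charP11 hF
  have h3 : φ = 3 := by rw [hφ]; norm_num
  subst h3
  refine ⟨?_, ?_⟩
  · linear_combination PC.eleven (F := F)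
  · exact_mod_cast PC.count hF
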